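/- The following are equivalent: (1) ω₁ < 𝔟; (2) every K-analytic Hausdorff topological space with a unique non-isolated point in which every compact subset is at most countable is itself at most countable. -/

import Mathlib

open Cardinal Set Topology

universe u

def FunctionallyHausdorff (X : Type u) [TopologicalSpace X] : Prop :=
  ∀ x y : X, x ≠ y → ∃ f : X → unitInterval, Continuous f ∧ f x = 0 ∧ f y = 1

def IsCechComplete (X : Type u) [TopologicalSpace X] : Prop :=
  ∃ (K : Type u) (_ : TopologicalSpace K) (e : X → K),
    CompactSpace K ∧ T2Space K ∧ IsEmbedding e ∧ DenseRange e ∧ IsGδ (Set.range e)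

noncomputable def lindelofNumber (X : Type u) [TopologicalSpace X] : Cardinal.{u} :=
  sInf {κ : Cardinal.{u} | ℵ₀ ≤ κ ∧ ∀ U : Set (Set X), (∀ u ∈ U, IsOpen u) → ⋃₀ U = Set.univ →
    ∃ V ⊆ U, #↥V ≤ κ ∧ ⋃₀ V = Set.univ}

noncomputable def pseudocharacter (X : Type u) [TopologicalSpace X] : Cardinal.{u} :=
  sInf {κ : Cardinal.{u} | ℵ₀ ≤ κ ∧ ∀ x : X, ∃ 𝒰 : Set (Set X),
    #↥𝒰 ≤ κ ∧ (∀ U ∈ 𝒰, IsOpen U ∧ x ∈ U) ∧ ⋂₀ 𝒰 = ⋂₀ {U : Set X | IsOpen U ∧ x ∈ U}}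

def IsScatteredSet {X : Type u} [TopologicalSpace X] (S : Set X) : Prop :=
  ∀ T ⊆ S, T.Nonempty → ∃ x ∈ T, ∃ U : Set X, IsOpen U ∧ U ∩ T = {x}

def IsKAnalytic (X : Type u) [TopologicalSpace X] : Prop :=
  ∃ (P : Type u) (_ : TopologicalSpace P) (f : P → X),
    LindelofSpace P ∧ IsCechComplete P ∧ Continuous f ∧ Function.Surjective f

def IsAnalyticSpace (X : Type u) [TopologicalSpace X] : Prop :=
  ∃ (P : Type u) (_ : TopologicalSpace P), PolishSpace P ∧
    ∃ f : P → X, Continuous f ∧ Function.Surjective f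

noncomputable def boundingNumber : Cardinal.{0} :=
  sInf {κ : Cardinal.{0} | ∃ B : Set (ℕ → ℕ), #↥B = κ ∧
    ∀ y : ℕ → ℕ, ∃ x ∈ B, {n : ℕ | ¬ x n ≤ y n}.Infinite}

/-!
A K-analytic space is covered by compact sets `C y`, `y : ℕ → ℕ`, increasing in `y`. If `x ≤* y`,
then `x ≤ y + k` pointwise for some constant `k`, so fewer than `𝔟` points are always covered by
the countably many compact sets `C (y + k)`. If `ℵ₁ < 𝔟` and compact sets are countable, then no
subset of the space has cardinality `ℵ₁`.

If `𝔟 = ℵ₁`, there are `ℵ₁` functions `b i : ℕ → ℕ` of which at most countably many lie below any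
given `y`. Double each point `b i` of `ℕ → ℕ` by an isolated point `i`, then collapse `ℕ → ℕ` to a
single point `∞`. A set of isolated points on which some coordinate `b i n` is injective is closed
and discrete, so on a compact set every coordinate takes finitely many values; the `b i` occurring
there have a common upper bound, and there are countably many of them.
-/

section BoundingNumber

theorem exists_unbounded_of_mk_eq_boundingNumber : ∃ B : Set (ℕ → ℕ), #B = boundingNumber ∧
    ∀ y : ℕ → ℕ, ∃ x ∈ B, ¬ x ≤ᶠ[Filter.cofinite] y :=
  csInf_mem (s := {κ : Cardinal.{0} | ∃ B : Set (ℕ → ℕ), #B = κ ∧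
      ∀ y : ℕ → ℕ, ∃ x ∈ B, {n : ℕ | ¬ x n ≤ y n}.Infinite})
    ⟨_, univ, rfl, fun y => ⟨y + 1, mem_univ _, by simpa using infinite_univ⟩⟩

theorem exists_forall_eventuallyLE_of_mk_lt_boundingNumber {ι : Type u}
    (hι : #ι < lift.{u} boundingNumber) (b : ι → ℕ → ℕ) :
    ∃ y, ∀ i, b i ≤ᶠ[Filter.cofinite] y := by
  by_contra! h
  have hle : boundingNumber ≤ #(range b) :=
    csInf_le' ⟨_, rfl, fun y => (h y).elim fun i hi => ⟨b i, mem_range_self i, hi⟩⟩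
  refine hι.not_ge ((lift_le.mpr hle).trans ?_)
  simpa only [lift_uzero] using mk_range_le_lift (f := b)

theorem exists_forall_eventuallyLE_of_countable {ι : Type*} [Countable ι] (b : ι → ℕ → ℕ) :
    ∃ y, ∀ i, b i ≤ᶠ[Filter.cofinite] y := by
  rcases isEmpty_or_nonempty ι with _ | _
  · exact ⟨0, isEmptyElim⟩
  obtain ⟨s, hs⟩ := exists_surjective_nat ι
  refine ⟨fun n => partialSups (b ∘ s) n n, hs.forall.mpr fun k => ?_⟩
  rw [Nat.cofinite_eq_atTop]
  filter_upwards [Filter.eventually_ge_atTop k] with n hkn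
  exact le_partialSups_of_le (b ∘ s) hkn n

theorem aleph0_lt_boundingNumber : ℵ₀ < boundingNumber := by
  obtain ⟨B, hB, hunbounded⟩ := exists_unbounded_of_mk_eq_boundingNumber
  rw [← hB, aleph0_lt_mk_iff, ← not_countable_iff]
  intro _
  obtain ⟨y, hy⟩ := exists_forall_eventuallyLE_of_countable (Subtype.val : B → ℕ → ℕ)
  obtain ⟨x, hx, hxy⟩ := hunbounded y
  exact hxy (hy ⟨x, hx⟩)

/-- Enumerate an unbounded family in order type `𝔟` and let `b i` dominate its members up to `i`:
no `y` can then dominate cofinally many of the `b i`. -/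
theorem exists_forall_mk_eventuallyLE_lt_boundingNumber :
    ∃ b : boundingNumber.ord.ToType → ℕ → ℕ,
      ∀ y, #{i | b i ≤ᶠ[Filter.cofinite] y} < boundingNumber := by
  let I := boundingNumber.ord.ToType
  have hI : #I = boundingNumber := mk_ord_toType _
  have hIic (i : I) : #(Iic i) < boundingNumber :=
    (mk_Iic_lt i (by simp [I]) (hI.symm ▸ aleph0_lt_boundingNumber.le)).trans_eq hI
  obtain ⟨B, hB, hunbounded⟩ := exists_unbounded_of_mk_eq_boundingNumber
  obtain ⟨s⟩ : Nonempty (I ≃ B) := Cardinal.eq.mp (hI.trans hB.symm)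
  choose b hb using fun i : I => exists_forall_eventuallyLE_of_mk_lt_boundingNumber
    ((hIic i).trans_eq (lift_uzero _).symm) fun k => (s k : ℕ → ℕ)
  refine ⟨b, fun y => ?_⟩
  obtain ⟨x, hx, hxy⟩ := hunbounded y
  refine (mk_le_mk_of_subset fun i hi => ?_).trans_lt (hIic (s.symm ⟨x, hx⟩))
  by_contra hlt
  have hxb := hb i ⟨s.symm ⟨x, hx⟩, mem_Iic.mpr (not_le.mp hlt).le⟩
  rw [s.apply_symm_apply] at hxb
  exact hxy (hxb.trans hi)

theorem exists_uncountable_forall_countable_le (h : boundingNumber ≤ Cardinal.aleph 1) :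
    ∃ (I : Type u) (b : I → ℕ → ℕ), Uncountable I ∧ ∀ y, {i | b i ≤ y}.Countable := by
  obtain ⟨b, hb⟩ := exists_forall_mk_eventuallyLE_lt_boundingNumber
  refine ⟨ULift boundingNumber.ord.ToType, b ∘ ULift.down, ?_, fun y => ?_⟩
  · rw [← aleph0_lt_mk_iff, mk_uLift, mk_ord_toType, aleph0_lt_lift]
    exact aleph0_lt_boundingNumber
  · have hlt := (hb y).trans_le h
    rw [← succ_aleph0, Order.lt_succ_iff, le_aleph0_iff_set_countable] at hlt
    exact (hlt.preimage ULift.down_injective).mono fun i hi =>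
      (Filter.Eventually.of_forall hi : b i.down ≤ᶠ[Filter.cofinite] y)

theorem exists_le_add_const_of_eventuallyLE_cofinite {ι : Type*} {x y : ι → ℕ}
    (h : x ≤ᶠ[Filter.cofinite] y) : ∃ k : ℕ, x ≤ fun i => y i + k := by
  obtain ⟨k, hk⟩ := (Set.Finite.image x (Filter.eventually_cofinite.mp h)).bddAbove
  refine ⟨k, fun i => ?_⟩
  by_cases hi : x i ≤ y i
  · exact hi.trans (Nat.le_add_right _ _)
  · exact (hk (mem_image_of_mem x hi)).trans (Nat.le_add_left _ _)

end BoundingNumber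

section CompactResolution

/-- A compact resolution of a set `s`: a cover of `s` by compact subsets indexed by `ℕ → ℕ` and
increasing for the pointwise order. -/
structure IsCompactResolution {X : Type*} [TopologicalSpace X] (C : (ℕ → ℕ) → Set X)
    (s : Set X) : Prop where
  isCompact : ∀ y, IsCompact (C y)
  monotone : Monotone C
  iUnion_eq : ⋃ y, C y = s

variable {X : Type u} {Y : Type*} [TopologicalSpace X] [TopologicalSpace Y]
  {C : (ℕ → ℕ) → Set X} {s : Set X}

theorem IsCompactResolution.image (hC : IsCompactResolution C s) {f : X → Y}
    (hf : Continuous f) : IsCompactResolution (fun y => f '' C y) (f '' s) where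
  isCompact y := (hC.isCompact y).image hf
  monotone _ _ h := image_mono (hC.monotone h)
  iUnion_eq := by rw [← image_iUnion, hC.iUnion_eq]

theorem IsCompactResolution.preimage_of_isInducing {f : Y → X}
    (hC : IsCompactResolution C (range f)) (hf : IsInducing f) :
    IsCompactResolution (fun y => f ⁻¹' C y) univ where
  isCompact y :=
    (hf.isCompact_preimage_iff (hC.iUnion_eq ▸ subset_iUnion C y)).mpr (hC.isCompact y)
  monotone _ _ h := preimage_mono (hC.monotone h)
  iUnion_eq := by rw [← preimage_iUnion, hC.iUnion_eq, preimage_range]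

theorem exists_seq_isClosed_cover_of_isLindelof [RegularSpace X] {U : Set X} (hs : IsLindelof s)
    (hU : IsOpen U) (hsU : s ⊆ U) :
    ∃ V : ℕ → Set X, (∀ m, IsClosed (V m)) ∧ (∀ m, V m ⊆ U) ∧ s ⊆ ⋃ m, V m := by
  have : Nonempty {V : Set X // IsClosed V ∧ V ⊆ U} := ⟨⟨∅, isClosed_empty, empty_subset U⟩⟩
  obtain ⟨V, hV⟩ := hs.indexed_countable_subcover
    (fun V : {V : Set X // IsClosed V ∧ V ⊆ U} => interior V.1) (fun _ => isOpen_interior)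
    fun x hx => by
      obtain ⟨V, hxV, hV⟩ := exists_mem_nhds_isClosed_subset (hU.mem_nhds (hsU hx))
      exact mem_iUnion.mpr ⟨⟨V, hV⟩, mem_interior_iff_mem_nhds.mpr hxV⟩
  exact ⟨fun m => V m, fun m => (V m).2.1, fun m => (V m).2.2,
    hV.trans (iUnion_mono fun _ => interior_subset)⟩

theorem exists_isCompactResolution_of_isGδ [CompactSpace X] [RegularSpace X] (hs : IsLindelof s)
    (hsG : IsGδ s) : ∃ C, IsCompactResolution C s := by
  obtain ⟨U, hUo, hU⟩ := isGδ_iff_eq_iInter_nat.mp hsG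
  choose V hVc hVU hsV using fun n =>
    exists_seq_isClosed_cover_of_isLindelof hs (hUo n) (hU.trans_subset (iInter_subset U n))
  refine ⟨fun y => ⋂ n, ⋃ m ∈ Iic (y n), V n m, fun y => ?_, fun y z hyz => ?_,
    subset_antisymm (iUnion_subset fun y => ?_) fun p hp => ?_⟩
  · exact (isClosed_iInter fun n =>
      (finite_Iic _).isClosed_biUnion fun m _ => hVc n m).isCompact
  · exact iInter_mono fun n => biUnion_subset_biUnion_left (Iic_subset_Iic.mpr (hyz n))
  · rw [hU]
    exact iInter_mono fun n => iUnion₂_subset fun m _ => hVU n m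
  · choose y hy using fun n => mem_iUnion.mp (hsV n hp)
    exact mem_iUnion.mpr
      ⟨y, mem_iInter.mpr fun n => mem_iUnion₂.mpr ⟨y n, mem_Iic.mpr le_rfl, hy n⟩⟩

theorem IsCompactResolution.exists_seq_cover (hC : IsCompactResolution C s) {t : Set X}
    (hts : t ⊆ s) (ht : #t < lift.{u} boundingNumber) : ∃ y : ℕ → ℕ → ℕ, t ⊆ ⋃ k, C (y k) := by
  choose x hx using fun p : t => mem_iUnion.mp (hC.iUnion_eq.symm ▸ hts p.2)
  obtain ⟨y, hy⟩ := exists_forall_eventuallyLE_of_mk_lt_boundingNumber ht x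
  refine ⟨fun k n => y n + k, fun p hp => ?_⟩
  obtain ⟨k, hk⟩ := exists_le_add_const_of_eventuallyLE_cofinite (hy ⟨p, hp⟩)
  exact mem_iUnion.mpr ⟨k, hC.monotone hk (hx ⟨p, hp⟩)⟩

end CompactResolution

section KAnalytic

variable {X : Type u} [TopologicalSpace X]

theorem IsCechComplete.exists_isCompactResolution [LindelofSpace X] (hX : IsCechComplete X) :
    ∃ C : (ℕ → ℕ) → Set X, IsCompactResolution C univ := by
  obtain ⟨K, _, e, _, _, he, -, hG⟩ := hX
  obtain ⟨C, hC⟩ := exists_isCompactResolution_of_isGδ (isLindelof_range he.continuous) hG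
  exact ⟨_, hC.preimage_of_isInducing he.isInducing⟩

theorem IsKAnalytic.exists_isCompactResolution (hX : IsKAnalytic X) :
    ∃ C : (ℕ → ℕ) → Set X, IsCompactResolution C univ := by
  obtain ⟨P, _, f, _, hP, hf, hsurj⟩ := hX
  obtain ⟨C, hC⟩ := hP.exists_isCompactResolution
  exact ⟨_, image_univ_of_surjective hsurj ▸ hC.image hf⟩

theorem IsKAnalytic.countable_of_forall_isCompact (hX : IsKAnalytic X)
    (h : Cardinal.aleph 1 < boundingNumber) (hcompact : ∀ K : Set X, IsCompact K → K.Countable) :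
    Countable X := by
  by_contra hunc
  obtain ⟨t, ht⟩ : ∃ t : Set X, #t = Cardinal.aleph 1 := by
    rwa [← le_mk_iff_exists_set, ← succ_aleph0, Order.succ_le_iff, aleph0_lt_mk_iff,
      ← not_countable_iff]
  obtain ⟨C, hC⟩ := hX.exists_isCompactResolution
  obtain ⟨y, hy⟩ := hC.exists_seq_cover (subset_univ t) <| by
    simpa only [ht, lift_aleph, Ordinal.lift_one] using lift_lt.{0, u}.mpr h
  have htc : t.Countable := (countable_iUnion fun k => hcompact _ (hC.isCompact (y k))).mono hy
  rw [← le_aleph0_iff_set_countable, ht] at htc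
  exact htc.not_gt aleph0_lt_aleph_one

end KAnalytic

section CechComplete

universe v

theorem IsCechComplete.of_isEmbedding {P K : Type u} [TopologicalSpace P] [TopologicalSpace K]
    [CompactSpace K] [T2Space K] {e : P → K} (he : IsEmbedding e) {F G : Set K}
    (hF : IsClosed F) (hG : IsGδ G) (h : range e = F ∩ G) : IsCechComplete P := by
  have hmem (p : P) : e p ∈ closure (range e) := subset_closure (mem_range_self p)
  refine ⟨closure (range e), inferInstance, codRestrict e _ hmem,
    isCompact_iff_compactSpace.mp isClosed_closure.isCompact, inferInstance,
    he.codRestrict _ _, ?_, ?_⟩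
  · rw [DenseRange, Subtype.dense_iff]
    intro x hx
    rwa [← range_comp]
  · have hrange : range (codRestrict e _ hmem) = Subtype.val ⁻¹' G := by
      ext ⟨x, hx⟩
      have hxF : x ∈ F := closure_minimal (h.trans_subset inter_subset_left) hF hx
      have hxG : x ∈ range e ↔ x ∈ G := by rw [h, mem_inter_iff, and_iff_right hxF]
      simp only [mem_preimage, ← hxG, mem_range, Subtype.ext_iff, val_codRestrict_apply]
    exact hrange ▸ hG.preimage continuous_subtype_val

theorem IsCechComplete.of_isClosedEmbedding {P Q : Type u} [TopologicalSpace P]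
    [TopologicalSpace Q] (hQ : IsCechComplete Q) {f : P → Q} (hf : IsClosedEmbedding f) :
    IsCechComplete P := by
  obtain ⟨K, _, e, _, _, he, -, hG⟩ := hQ
  refine .of_isEmbedding (he.comp hf.isEmbedding) (isClosed_closure (s := e '' range f)) hG ?_
  rw [range_comp, inter_comm, ← image_preimage_eq_range_inter,
    ← he.closure_eq_preimage_closure_image, hf.isClosed_range.closure_eq]

theorem IsCechComplete.of_weaklyLocallyCompactSpace (P : Type u) [TopologicalSpace P]
    [WeaklyLocallyCompactSpace P] [T2Space P] : IsCechComplete P :=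
  .of_isEmbedding OnePoint.isOpenEmbedding_coe.isEmbedding isClosed_univ
    OnePoint.isOpen_range_coe.isGδ (univ_inter _).symm

theorem IsCechComplete.prod {P : Type u} {Q : Type v} [TopologicalSpace P] [TopologicalSpace Q]
    (hP : IsCechComplete P) (hQ : IsCechComplete Q) : IsCechComplete (P × Q) := by
  obtain ⟨K, _, e, _, _, he, -, hG⟩ := hP
  obtain ⟨L, _, f, _, _, hf, -, hH⟩ := hQ
  refine .of_isEmbedding (he.prodMap hf) isClosed_univ
    ((hG.preimage continuous_fst).inter (hH.preimage continuous_snd)) ?_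
  rw [range_prodMap, univ_inter, prod_eq]

theorem IsCechComplete.pi {ι : Type v} [Countable ι] {P : ι → Type u}
    [∀ i, TopologicalSpace (P i)] (hP : ∀ i, IsCechComplete (P i)) :
    IsCechComplete (∀ i, P i) := by
  choose K _ e _ _ he _ hG using hP
  refine .of_isEmbedding (.piMap he) isClosed_univ
    (.iInter fun i => (hG i).preimage (continuous_apply i)) ?_
  rw [range_piMap, univ_inter, pi_def, biInter_univ]

end CechComplete

theorem lindelofSpace_of_isProperMap {X Y : Type*} [TopologicalSpace X] [TopologicalSpace Y]
    [LindelofSpace Y] {f : X → Y} (hf : IsProperMap f) : LindelofSpace X := by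
  refine ⟨fun F _ _ _ => ?_⟩
  obtain ⟨y, hy⟩ := cluster_point_of_Lindelof (Filter.map f F)
  obtain ⟨x, -, hx⟩ := hf.clusterPt_of_mapClusterPt hy
  exact ⟨x, mem_univ x, hx⟩

section Duplicate

open scoped OnePoint

universe v

variable {Z : Type v} {I : Type*} (c : I → Z)

/-- The Alexandroff duplicate of `Z` in which only the points `c i` are doubled: `(z, ∞)` is the
original point `z`, and `(c i, i)` is the isolated double of `c i` with index `i`. -/
def duplicate : Set (Z × OnePoint I) := {p | ∀ i : I, p.2 = i → p.1 = c i}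

theorem isClosed_duplicate [TopologicalSpace Z] [T1Space Z] [TopologicalSpace I]
    [DiscreteTopology I] : IsClosed (duplicate c) := by
  rw [duplicate, ofPred_forall]
  refine isClosed_iInter fun i => isClosed_imp ?_ (isClosed_singleton.preimage continuous_fst)
  have hi : IsOpen ({(i : OnePoint I)} : Set (OnePoint I)) :=
    image_singleton ▸ OnePoint.isOpenMap_coe _ (isOpen_discrete {i})
  exact hi.preimage continuous_snd

instance lindelofSpace_duplicate [TopologicalSpace Z] [T1Space Z] [LindelofSpace Z]
    [TopologicalSpace I] [DiscreteTopology I] : LindelofSpace (duplicate c) :=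
  lindelofSpace_of_isProperMap <| isProperMap_fst_of_compactSpace.comp
    (isClosed_duplicate c).isClosedEmbedding_subtypeVal.isProperMap

/-- The quotient of `duplicate c` by the set of original points; only its topology, defined below,
depends on `c`. It provides the uncountable spaces with countable compact sets. -/
def CollapsedDuplicate (_ : I → Z) : Type _ := OnePoint I

namespace CollapsedDuplicate

/-- The isolated point with index `i`. -/
def point (i : I) : CollapsedDuplicate c := (i : OnePoint I)

/-- The point to which the original points of `duplicate c` are collapsed. -/
def infty : CollapsedDuplicate c := (∞ : OnePoint I)

/-- The quotient map. -/
def mk (p : duplicate c) : CollapsedDuplicate c := p.1.2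

/-- The identity, as a map to the one-point compactification of the discrete space `I`. -/
def toOnePoint (x : CollapsedDuplicate c) : OnePoint I := x

theorem point_injective : Function.Injective (point c) := OnePoint.coe_injective

theorem eq_infty_or_eq_point (x : CollapsedDuplicate c) : x = infty c ∨ ∃ i, x = point c i := by
  induction x using OnePoint.rec with
  | infty => exact .inl rfl
  | coe i => exact .inr ⟨i, rfl⟩

theorem mk_surjective [Nonempty Z] : Function.Surjective (mk c) := by
  intro x
  rcases eq_infty_or_eq_point c x with rfl | ⟨i, rfl⟩
  · exact ⟨⟨(Classical.arbitrary Z, ∞), fun i hi => (OnePoint.infty_ne_coe i hi).elim⟩, rfl⟩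
  · exact ⟨⟨(c i, i), fun j hj => congrArg c (OnePoint.coe_injective hj)⟩, rfl⟩

variable [TopologicalSpace Z] [TopologicalSpace I]

instance : TopologicalSpace (CollapsedDuplicate c) := .coinduced (mk c) inferInstance

theorem continuous_mk : Continuous (mk c) := continuous_coinduced_rng

theorem continuous_toOnePoint : Continuous (toOnePoint c) :=
  continuous_coinduced_dom.mpr (continuous_snd.comp continuous_subtype_val)

theorem isOpenMap_point : IsOpenMap (point c) := fun _ hs =>
  (OnePoint.isOpenMap_coe _ hs).preimage (continuous_toOnePoint c)

variable [DiscreteTopology I]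

instance : T2Space (CollapsedDuplicate c) :=
  .of_injective_continuous (f := toOnePoint c) (fun _ _ h => h) (continuous_toOnePoint c)

theorem isOpen_singleton_point (i : I) : IsOpen {point c i} :=
  image_singleton ▸ isOpenMap_point c _ (isOpen_discrete {i})

theorem not_isOpen_singleton_infty [T1Space Z] [LindelofSpace Z] [Nonempty Z] [Uncountable I] :
    ¬ IsOpen {infty c} := by
  intro h
  have : DiscreteTopology (CollapsedDuplicate c) := by
    refine discreteTopology_iff_isOpen_singleton.mpr fun x => ?_
    rcases eq_infty_or_eq_point c x with rfl | ⟨i, rfl⟩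
    exacts [h, isOpen_singleton_point c i]
  have : LindelofSpace (CollapsedDuplicate c) :=
    .of_continuous_surjective (continuous_mk c) (mk_surjective c)
  have : Countable (CollapsedDuplicate c) := countable_of_Lindelof_of_discrete
  exact not_countable (point_injective c).countable

theorem existsUnique_not_isOpen_singleton [T1Space Z] [LindelofSpace Z] [Nonempty Z]
    [Uncountable I] : ∃! x : CollapsedDuplicate c, ¬ IsOpen {x} := by
  refine ⟨infty c, not_isOpen_singleton_infty c, fun x hx => ?_⟩
  rcases eq_infty_or_eq_point c x with rfl | ⟨i, rfl⟩
  exacts [rfl, (hx (isOpen_singleton_point c i)).elim]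

theorem isKAnalytic {I : Type max u v} [TopologicalSpace I] [DiscreteTopology I] (c : I → Z)
    [T1Space Z] [LindelofSpace Z] [Nonempty Z] (hZ : IsCechComplete Z) :
    IsKAnalytic (CollapsedDuplicate c) :=
  ⟨duplicate c, inferInstance, mk c, inferInstance,
    (hZ.prod (.of_weaklyLocallyCompactSpace _)).of_isClosedEmbedding
      (isClosed_duplicate c).isClosedEmbedding_subtypeVal,
    continuous_mk c, mk_surjective c⟩

variable {c}

theorem isClosed_image_point_of_locallyFinite [T1Space Z] {S : Set I}
    (hS : LocallyFinite fun i : S => ({c i} : Set Z)) : IsClosed (point c '' S) := by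
  have hpre : mk c ⁻¹' (point c '' S) =
      ⋃ i : S, {p : duplicate c | p.1 = (c i, ((i : I) : OnePoint I))} := by
    ext p
    simp only [mem_preimage, mem_image, mem_iUnion, mem_ofPred_eq, Subtype.exists, exists_prop]
    refine exists_congr fun i => and_congr_right fun _ => ⟨fun hi => ?_, fun hi => ?_⟩
    · exact Prod.ext (p.2 i hi.symm) hi.symm
    · exact (congrArg Prod.snd hi).symm
  refine isClosed_coinduced.mpr (hpre ▸ LocallyFinite.isClosed_iUnion ?_ fun i => ?_)
  · exact (hS.preimage_continuous (continuous_fst.comp continuous_subtype_val)).subset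
      fun i p hp => congrArg Prod.fst hp
  · exact isClosed_singleton.preimage continuous_subtype_val

theorem finite_of_locallyFinite_of_isCompact [T1Space Z] {K : Set (CollapsedDuplicate c)}
    (hK : IsCompact K) {S : Set I} (hSK : point c '' S ⊆ K)
    (hS : LocallyFinite fun i : S => ({c i} : Set Z)) : S.Finite := by
  have hcompact := hK.of_isClosed_subset (isClosed_image_point_of_locallyFinite hS) hSK
  have hdiscrete : IsDiscrete (point c '' S) :=
    IsDiscrete.image_of_isOpenMap ⟨inferInstance⟩ (isOpenMap_point c) (point_injective c)
  exact (hcompact.finite hdiscrete).of_finite_image (point_injective c).injOn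

theorem finite_image_of_isCompact [T1Space Z] {D : Type*} [TopologicalSpace D]
    [DiscreteTopology D] {f : Z → D} (hf : Continuous f) {K : Set (CollapsedDuplicate c)}
    (hK : IsCompact K) : ((f ∘ c) '' (point c ⁻¹' K)).Finite := by
  obtain ⟨S, hSK, hS⟩ := exists_subset_bijOn (point c ⁻¹' K) (f ∘ c)
  have hsingleton : LocallyFinite fun d : D => ({d} : Set D) := fun d =>
    ⟨{d}, (isOpen_discrete {d}).mem_nhds rfl,
      (finite_singleton d).subset fun _ ⟨_, h, h'⟩ => h.symm.trans h'⟩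
  have hfiber : LocallyFinite fun i : S => f ⁻¹' {f (c i)} :=
    (hsingleton.comp_injective hS.injOn.injective).preimage_continuous hf
  rw [← hS.image_eq]
  exact (finite_of_locallyFinite_of_isCompact hK (image_subset_iff.mpr hSK)
    (hfiber.subset fun i => singleton_subset_iff.mpr rfl)).image _

theorem countable_of_isCompact {b : I → ℕ → ℕ} (hb : ∀ y, {i | b i ≤ y}.Countable)
    {K : Set (CollapsedDuplicate b)} (hK : IsCompact K) : K.Countable := by
  choose y hy using fun n => (finite_image_of_isCompact (continuous_apply n) hK).bddAbove
  have hpoint : (point b ⁻¹' K).Countable :=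
    (hb y).mono fun i hi n => hy n (mem_image_of_mem _ hi)
  refine ((hpoint.image (point b)).insert (infty b)).mono fun x hx => ?_
  rcases eq_infty_or_eq_point b x with rfl | ⟨i, rfl⟩
  exacts [mem_insert _ _, mem_insert_of_mem _ (mem_image_of_mem _ hx)]

end CollapsedDuplicate

end Duplicate

theorem exists_uncountable_isKAnalytic (h : boundingNumber ≤ Cardinal.aleph 1) :
    ∃ (X : Type u) (_ : TopologicalSpace X), T2Space X ∧ IsKAnalytic X ∧
      (∃! x : X, ¬ IsOpen ({x} : Set X)) ∧ (∀ K : Set X, IsCompact K → K.Countable) ∧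
      Uncountable X := by
  obtain ⟨I, b, _, hb⟩ := exists_uncountable_forall_countable_le.{u} h
  let _ : TopologicalSpace I := ⊥
  have : DiscreteTopology I := ⟨rfl⟩
  have hcech : IsCechComplete (ℕ → ℕ) := .pi fun _ => .of_weaklyLocallyCompactSpace ℕ
  exact ⟨CollapsedDuplicate b, inferInstance, inferInstance, CollapsedDuplicate.isKAnalytic b hcech,
    CollapsedDuplicate.existsUnique_not_isOpen_singleton b,
    fun _ => CollapsedDuplicate.countable_of_isCompact hb,
    (CollapsedDuplicate.point_injective b).uncountable⟩

theorem stmt11_general : List.TFAE [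
    Cardinal.aleph 1 < boundingNumber,
    ∀ (X : Type u) (_ : TopologicalSpace X), IsKAnalytic X →
      (∀ K : Set X, IsCompact K → K.Countable) → Countable X,
    ∀ (X : Type u) (_ : TopologicalSpace X), T2Space X → IsKAnalytic X →
      (∃! x : X, ¬ IsOpen ({x} : Set X)) →
      (∀ K : Set X, IsCompact K → K.Countable) → Countable X] := by
  tfae_have 1 → 2 := fun h X _ hX => hX.countable_of_forall_isCompact h
  tfae_have 2 → 3 := fun h X _ _ hX _ => h X _ hX
  tfae_have 3 → 1 := fun h => by
    by_contra! hle
    obtain ⟨X, _, hT2, hX, hunique, hcompact, hunc⟩ := exists_uncountable_isKAnalytic.{u} hle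
    exact not_countable (h X _ hT2 hX hunique hcompact)
  tfae_finish

theorem stmt11 :
    Cardinal.aleph 1 < boundingNumber ↔
      ∀ (X : Type u) (_ : TopologicalSpace X), T2Space X → IsKAnalytic X →
        (∃! x : X, ¬ IsOpen ({x} : Set X)) →
        (∀ K : Set X, IsCompact K → K.Countable) → Countable X :=
  stmt11_general.out 0 2
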